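/- Fix k ≥ 1. With a_{k,n} the number of k-ary trees with exactly n nodes and c_{k,n} the total number of leaves summed over all k-ary trees with exactly n nodes, the expected number of leaves per node satisfies lim_{n→∞} c_{k,n}/(n · a_{k,n}) = ((k−1)/k)^k; equivalently, the expected number of leaf nodes among k-ary trees of n nodes is asymptotic to (1 − 1/k)^k · n. -/

import Mathlib

/-!
Counting is done on forests, that is, on `r`-tuples of `k`-ary trees with `n` nodes in total.
If the first tree of an `(r + 1)`-forest is empty, deleting it leaves an `r`-forest with `n` nodes;
otherwise deleting its root leaves a `(k + r)`-forest with `n - 1` nodes. Hence the number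
`N(n, r)` of forests satisfies, for `n ≥ 1`, `N(n, r + 1) = N(n, r) + N(n - 1, k + r)`, which is solved by
`(k n + r) N(n, r) = r * C(k n + r, n)` (`KTree.card_forests`). The total number of leaves
`L(n, r)` satisfies the same recurrence with the extra term `N(n - 1, r)`, which counts the forests
whose first root is a leaf, and the solution is `L(m + 1, r) = r * C(k m + r - 1, m)`
(`KTree.sum_leaves_forests`).

For `r = 1` and `n = m + 1` the quotient of the two closed forms, divided by `n`, is the product
of the `k` factors `((k - 1) m + i + 1) / (k m + i + 1)`, `0 ≤ i < k` (`KTree.ratio_eq`),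
and each factor tends to `(k - 1) / k`.
-/

/-- A `k`-ary tree: either empty, or a node with an ordered `k`-tuple of children. -/
inductive KTree (k : ℕ) : Type
  | empty : KTree k
  | node : (Fin k → KTree k) → KTree k

namespace KTree

/-- The number of nodes of a `k`-ary tree. -/
def nodes {k : ℕ} : KTree k → ℕ
  | .empty => 0
  | .node c => 1 + ∑ i : Fin k, nodes (c i)

/-- Whether a tree is the empty tree. -/
def isEmptyTree {k : ℕ} : KTree k → Bool
  | .empty => true
  | .node _ => false

/-- The number of leaves of a `k`-ary tree: a leaf is a node all of whose children
are empty. -/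
def leaves {k : ℕ} : KTree k → ℕ
  | .empty => 0
  | .node c => if ∀ i : Fin k, isEmptyTree (c i) = true then 1 else ∑ i : Fin k, leaves (c i)

end KTree

namespace KTree

open Finset

/-! ### Forests -/

/-- Restores a forest from `g`, the result of deleting the root of its first tree: the first `k`
trees of `g` become the children of a new root, and the other `r` trees are kept. -/
def graft {k r : ℕ} (g : Fin (k + r) → KTree k) : Fin (r + 1) → KTree k :=
  Fin.cons (node fun i => g (Fin.castAdd r i)) fun j => g (Fin.natAdd k j)

lemma graft_injective {k r : ℕ} :
    Function.Injective (graft : (Fin (k + r) → KTree k) → Fin (r + 1) → KTree k) := by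
  intro g h e
  obtain ⟨h1, h2⟩ := Fin.cons_inj.1 e
  have h1' := KTree.node.inj h1
  funext i
  refine Fin.addCases (fun i => ?_) (fun j => ?_) i
  · exact congrFun h1' i
  · exact congrFun h2 j

lemma consEmpty_injective {k r : ℕ} :
    Function.Injective
      (fun f : Fin r → KTree k => (Fin.cons empty f : Fin (r + 1) → KTree k)) := by
  intro g h e
  exact (Fin.cons_inj.1 e).2

open Classical in
/-- The `r`-tuples of `k`-ary trees with `n` nodes in total, listed according to whether the
first tree is empty. -/
noncomputable def forests (k : ℕ) : (n r : ℕ) → Finset (Fin r → KTree k)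
  | 0, 0 => {Fin.elim0}
  | _ + 1, 0 => ∅
  | 0, r + 1 => (forests k 0 r).image fun f => Fin.cons empty f
  | n + 1, r + 1 =>
      ((forests k (n + 1) r).image fun f => Fin.cons empty f) ∪ (forests k n (k + r)).image graft
termination_by n r => (n, r)

lemma sum_nodes_graft {k r : ℕ} (g : Fin (k + r) → KTree k) :
    ∑ i, nodes (graft g i) = (∑ i, nodes (g i)) + 1 := by
  rw [Fin.sum_univ_succ, Fin.sum_univ_add]
  simp only [graft, Fin.cons_zero, Fin.cons_succ, nodes]
  ring

lemma sum_nodes_cons_empty {k r : ℕ} (f : Fin r → KTree k) :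
    ∑ i, nodes ((Fin.cons empty f : Fin (r + 1) → KTree k) i) = ∑ i, nodes (f i) := by
  rw [Fin.sum_univ_succ]
  simp [nodes]

/-- Every nonempty tuple of trees arises by one of the two constructions. -/
lemma forest_cases {k r : ℕ} (f : Fin (r + 1) → KTree k) :
    (∃ g : Fin r → KTree k, Fin.cons empty g = f) ∨ ∃ g, graft g = f := by
  rcases h : f 0 with _ | c
  · left
    refine ⟨Fin.tail f, ?_⟩
    rw [← h, Fin.cons_self_tail]
  · right
    refine ⟨Fin.append c (Fin.tail f), ?_⟩
    simp only [graft, Fin.append_left, Fin.append_right]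
    rw [← h]
    exact Fin.cons_self_tail f

open Classical in
lemma mem_forests {k : ℕ} (n r : ℕ) (f : Fin r → KTree k) :
    f ∈ forests k n r ↔ ∑ i, nodes (f i) = n := by
  induction n generalizing r with
  | zero =>
    induction r with
    | zero => simp [forests, eq_iff_true_of_subsingleton]
    | succ r ih =>
      rw [forests, mem_image]
      constructor
      · rintro ⟨g, hg, rfl⟩
        rw [sum_nodes_cons_empty]
        exact (ih g).1 hg
      · intro hf
        rcases forest_cases f with ⟨g, rfl⟩ | ⟨g, rfl⟩
        · rw [sum_nodes_cons_empty] at hf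
          exact ⟨g, (ih g).2 hf, rfl⟩
        · rw [sum_nodes_graft] at hf
          omega
  | succ n ihn =>
    induction r with
    | zero => simp [forests]
    | succ r ih =>
      rw [forests, mem_union, mem_image, mem_image]
      constructor
      · rintro (⟨g, hg, rfl⟩ | ⟨g, hg, rfl⟩)
        · rw [sum_nodes_cons_empty]
          exact (ih g).1 hg
        · rw [sum_nodes_graft, (ihn _ g).1 hg]
      · intro hf
        rcases forest_cases f with ⟨g, rfl⟩ | ⟨g, rfl⟩
        · rw [sum_nodes_cons_empty] at hf
          exact Or.inl ⟨g, (ih g).2 hf, rfl⟩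
        · rw [sum_nodes_graft] at hf
          exact Or.inr ⟨g, (ihn _ g).2 (by omega), rfl⟩

/-- The recurrence behind both enumerations: a sum over forests splits according to whether the
first tree is empty. -/
lemma sum_forests_succ (k n r : ℕ) (w : (Fin (r + 1) → KTree k) → ℕ) :
    ∑ f ∈ forests k (n + 1) (r + 1), w f =
      (∑ f ∈ forests k (n + 1) r, w (Fin.cons empty f)) +
        ∑ g ∈ forests k n (k + r), w (graft g) := by
  classical
  rw [forests, sum_union, sum_image consEmpty_injective.injOn, sum_image graft_injective.injOn]
  rw [disjoint_left]
  intro f hf hf'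
  obtain ⟨g, -, rfl⟩ := mem_image.1 hf
  obtain ⟨g', -, h⟩ := mem_image.1 hf'
  have := (Fin.cons_inj.1 h).1
  cases this

/-! ### The number of forests -/

open Classical in
lemma card_forests_zero (k r : ℕ) : (forests k 0 r).card = 1 := by
  induction r with
  | zero => simp [forests]
  | succ r ih => rw [forests, card_image_of_injective _ consEmpty_injective, ih]

lemma card_forests_succ (k n r : ℕ) :
    (forests k (n + 1) (r + 1)).card =
      (forests k (n + 1) r).card + (forests k n (k + r)).card := by
  simpa using sum_forests_succ k n r fun _ => 1

/-- `C(M, n + 1) (n + 1) = C(M, n) (M - n)`, with the subtraction in `ℤ`. -/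
lemma choose_succ_int {M n : ℕ} (h : n ≤ M) :
    (M.choose (n + 1) : ℤ) * (n + 1) = M.choose n * (M - n) := by
  have := Nat.choose_succ_right_eq M n
  zify [h] at this
  exact this

/-- The number of forests is `r / (k n + r) * C(k n + r, n)`. -/
lemma card_forests (k : ℕ) (hk : 1 ≤ k) (n r : ℕ) :
    (k * n + r) * (forests k n r).card = r * (k * n + r).choose n := by
  induction n generalizing r with
  | zero => simp [card_forests_zero]
  | succ n ihn =>
    induction r with
    | zero => simp [forests]
    | succ r ih =>
      rw [card_forests_succ]
      have h2 := ihn (k + r)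
      obtain ⟨M, hM⟩ : ∃ M, M = k * (n + 1) + r := ⟨_, rfl⟩
      have hM2 : k * n + (k + r) = M := by rw [hM]; ring
      have hM3 : k * (n + 1) + (r + 1) = M + 1 := by rw [hM]; ring
      rw [← hM] at ih
      rw [hM2] at h2
      rw [hM3, Nat.choose_succ_succ]
      have hle : n + 1 ≤ M := by nlinarith
      have hc := choose_succ_int (M := M) (n := n) (by omega)
      have hM0 : (M : ℤ) ≠ 0 := by omega
      zify at ih h2 hM ⊢
      -- After multiplication by `M`, the two instances of the formula for smaller forests apply.
      apply mul_left_cancel₀ hM0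
      generalize (M.choose (n + 1) : ℤ) = A at *
      generalize (M.choose n : ℤ) = B at *
      linear_combination (M + 1 : ℤ) * ih + (M + 1 : ℤ) * h2 - (k : ℤ) * hc - (A + B) * hM

/-! ### The number of leaves -/

/-- The total number of leaves of a forest. -/
def forestLeaves {k r : ℕ} (f : Fin r → KTree k) : ℕ := ∑ i, leaves (f i)

lemma forestLeaves_cons_empty {k r : ℕ} (f : Fin r → KTree k) :
    forestLeaves (Fin.cons empty f : Fin (r + 1) → KTree k) = forestLeaves f := by
  rw [forestLeaves, Fin.sum_univ_succ]
  simp [leaves, forestLeaves]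

lemma isEmptyTree_iff {k : ℕ} (t : KTree k) : isEmptyTree t = true ↔ t = empty := by
  cases t <;> simp [isEmptyTree]

/-- Grafting creates one new leaf exactly if all children of the new root are empty. -/
lemma forestLeaves_graft {k r : ℕ} (g : Fin (k + r) → KTree k) :
    forestLeaves (graft g) =
      forestLeaves g + if ∀ i : Fin k, isEmptyTree (g (Fin.castAdd r i)) = true then 1 else 0 := by
  rw [forestLeaves, forestLeaves, Fin.sum_univ_succ, Fin.sum_univ_add]
  simp only [graft, Fin.cons_zero, Fin.cons_succ, leaves]
  split_ifs with h
  · have : ∑ i : Fin k, leaves (g (Fin.castAdd r i)) = 0 :=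
      sum_eq_zero fun i _ => by rw [(isEmptyTree_iff _).1 (h i), leaves]
    omega
  · omega

/-- The forests whose first `k` trees are empty correspond to forests on the remaining trees. -/
lemma sum_first_empty (k n r : ℕ) :
    (∑ g ∈ forests k n (k + r),
        if ∀ i : Fin k, isEmptyTree (g (Fin.castAdd r i)) = true then 1 else 0) =
      (forests k n r).card := by
  classical
  rw [← card_filter]
  symm
  refine card_bij (fun f _ => Fin.append (fun _ => empty) f) ?_ ?_ ?_
  · intro f hf
    rw [mem_filter, mem_forests, Fin.sum_univ_add]
    rw [mem_forests] at hf
    simp [isEmptyTree, nodes, hf]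
  · intro f _ g _ h
    funext j
    simpa using congrFun h (Fin.natAdd k j)
  · intro g hg
    rw [mem_filter, mem_forests, Fin.sum_univ_add] at hg
    obtain ⟨h1, h2⟩ := hg
    have h3 : ∀ i : Fin k, g (Fin.castAdd r i) = empty := fun i => (isEmptyTree_iff _).1 (h2 i)
    refine ⟨fun j => g (Fin.natAdd k j), ?_, ?_⟩
    · rw [mem_forests]
      simpa [h3, nodes] using h1
    · funext i
      refine Fin.addCases (fun i => ?_) (fun j => ?_) i
      · simp [h3]
      · simp

open Classical in
lemma sum_leaves_forests_zero (k r : ℕ) : ∑ f ∈ forests k 0 r, forestLeaves f = 0 := by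
  induction r with
  | zero => simp [forests, forestLeaves]
  | succ r ih =>
    rw [forests, sum_image consEmpty_injective.injOn]
    simpa [forestLeaves_cons_empty] using ih

lemma sum_leaves_forests_succ (k n r : ℕ) :
    ∑ f ∈ forests k (n + 1) (r + 1), forestLeaves f =
      (∑ f ∈ forests k (n + 1) r, forestLeaves f) +
        ((∑ g ∈ forests k n (k + r), forestLeaves g) + (forests k n r).card) := by
  rw [sum_forests_succ]
  simp only [forestLeaves_cons_empty, forestLeaves_graft, sum_add_distrib, sum_first_empty]

/-- The total number of leaves over all forests. The truncated subtraction is harmless: it only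
matters for `r = 0`, where both sides vanish. -/
lemma sum_leaves_forests (K m r : ℕ) :
    ∑ f ∈ forests (K + 1) (m + 1) r, forestLeaves f =
      r * ((K + 1) * m + r - 1).choose m := by
  induction m generalizing r with
  | zero =>
    induction r with
    | zero => simp [forests]
    | succ r ih =>
      rw [sum_leaves_forests_succ, ih, sum_leaves_forests_zero, card_forests_zero]
      simp
  | succ m ihm =>
    induction r with
    | zero => simp [forests]
    | succ r ih =>
      rw [sum_leaves_forests_succ, ih, ihm]
      have hN := card_forests (K + 1) (by omega) (m + 1) r
      obtain ⟨D, hD⟩ : ∃ D, D = (K + 1) * m + K + r := ⟨_, rfl⟩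
      have e1 : (K + 1) * (m + 1) + r = D + 1 := by rw [hD]; ring
      have e2 : (K + 1) * m + (K + 1 + r) = D + 1 := by rw [hD]; ring
      have e3 : (K + 1) * (m + 1) + (r + 1) = D + 2 := by rw [hD]; ring
      rw [e1] at hN
      rw [e1, e2, e3]
      simp only [Nat.add_sub_cancel, show D + 2 - 1 = D + 1 by omega]
      rw [Nat.choose_succ_succ] at hN ⊢
      have hle : m ≤ D := by nlinarith
      have hc := choose_succ_int hle
      -- `D + 1` is the denominator in the formula for the number of forests.
      have hD0 : (D + 1 : ℤ) ≠ 0 := by omega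
      zify at hN hD ⊢
      apply mul_left_cancel₀ hD0
      generalize (D.choose (m + 1) : ℤ) = A at *
      generalize (D.choose m : ℤ) = B at *
      linear_combination hN - (K + 1 : ℤ) * hc - (A + B) * hD

/-! ### Single trees and the limit -/

/-- Trees with `n` nodes are the same as forests consisting of one tree. -/
lemma bijOn_single (k n : ℕ) :
    Set.BijOn (fun (t : KTree k) (_ : Fin 1) => t) {t | nodes t = n} (forests k n 1) := by
  refine ⟨fun t ht => ?_, fun t _ u _ h => congrFun h 0, fun f hf => ⟨f 0, ?_, ?_⟩⟩
  · rw [mem_coe, mem_forests]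
    simpa using ht
  · rw [mem_coe, mem_forests] at hf
    simpa using hf
  · funext i
    rw [Subsingleton.elim i 0]

lemma card_trees (k n : ℕ) :
    Nat.card {t : KTree k // nodes t = n} = (forests k n 1).card := by
  rw [← Nat.card_eq_finsetCard]
  exact Nat.card_congr (bijOn_single k n).equiv

lemma finsum_leaves (k n : ℕ) :
    ∑ᶠ t ∈ {t : KTree k | nodes t = n}, leaves t = ∑ f ∈ forests k n 1, forestLeaves f := by
  rw [← finsum_mem_coe_finset]
  exact finsum_mem_eq_of_bijOn _ (bijOn_single k n) fun t _ => by simp [forestLeaves]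

/-- The factorials in the closed forms cancel down to `k = K + 1` linear factors. -/
lemma ratio_eq (K m : ℕ) (a : ℕ)
    (ha : ((K + 1) * (m + 1) + 1) * a = ((K + 1) * (m + 1) + 1).choose (m + 1)) :
    (((K + 1) * m).choose m : ℝ) / (((m + 1 : ℕ) : ℝ) * a) =
      ∏ i ∈ range (K + 1), (((i + 1 : ℝ) + K * m) / ((i + 1 : ℝ) + (K + 1) * m)) := by
  have h1 := Nat.add_choose_mul_factorial_mul_factorial m (K * m)
  have h2 := Nat.add_choose_mul_factorial_mul_factorial (m + 1) (K * m + (K + 1))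
  rw [← Nat.choose_symm_add] at h1 h2
  have h3 := Nat.factorial_mul_ascFactorial (K * m) (K + 1)
  have h4 := Nat.factorial_mul_ascFactorial (m + K * m) (K + 1)
  rw [show m + 1 + (K * m + (K + 1)) = m + K * m + (K + 1) + 1 by ring,
    Nat.factorial_succ (m + K * m + (K + 1))] at h2
  rw [show (K + 1) * (m + 1) + 1 = m + K * m + (K + 1) + 1 by ring] at ha
  rw [← ha, mul_assoc, mul_assoc] at h2
  have h5 := Nat.eq_of_mul_eq_mul_left (Nat.succ_pos _) h2
  rw [Nat.factorial_succ] at h5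
  have key : (m + K * m).choose m * (m + K * m + 1).ascFactorial (K + 1) =
      (K * m + 1).ascFactorial (K + 1) * ((m + 1) * a) := by
    apply Nat.eq_of_mul_eq_mul_left
      (Nat.mul_pos (Nat.factorial_pos m) (Nat.factorial_pos (K * m)))
    calc _ = (m + K * m).choose m * m.factorial * (K * m).factorial *
          (m + K * m + 1).ascFactorial (K + 1) := by ring
      _ = a * ((m + 1) * m.factorial * (K * m + (K + 1)).factorial) := by rw [h1, h4, h5]
      _ = _ := by rw [← h3]; ring
  have ha0 : 0 < a := by
    rcases Nat.eq_zero_or_pos a with h | h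
    · rw [h, zero_mul] at h5
      exact absurd h5.symm (Nat.factorial_ne_zero _)
    · exact h
  rw [Finset.prod_div_distrib, div_eq_div_iff (by positivity) (by positivity),
    show (K + 1) * m = m + K * m by ring]
  rw [Nat.ascFactorial_eq_prod_range, Nat.ascFactorial_eq_prod_range] at key
  have key' := congrArg (Nat.cast : ℕ → ℝ) key
  push_cast at key' ⊢
  convert key' using 3 <;> ring

end KTree

/-- The expected number of leaves among `k`-ary trees with `n` nodes is asymptotic to
`((k-1)/k)^k · n`: with `a n` the number of `k`-ary trees with `n` nodes and `c n` the
total number of leaves over all such trees, `c n / (n · a n) → ((k-1)/k)^k`. -/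
theorem ktree_expected_leaves (k : ℕ) (hk : 1 ≤ k) :
    Filter.Tendsto
      (fun n : ℕ =>
        ((∑ᶠ t ∈ {t : KTree k | KTree.nodes t = n}, KTree.leaves t : ℕ) : ℝ) /
          (n * (Nat.card {t : KTree k // KTree.nodes t = n} : ℝ)))
      Filter.atTop
      (nhds ((((k : ℝ) - 1) / k) ^ k)) := by
  obtain ⟨K, rfl⟩ : ∃ K, k = K + 1 := ⟨k - 1, by omega⟩
  rw [← Filter.tendsto_add_atTop_iff_nat 1]
  have hfun : ∀ m : ℕ,
      ((∑ᶠ t ∈ {t : KTree (K + 1) | KTree.nodes t = m + 1}, KTree.leaves t : ℕ) : ℝ) /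
          (((m + 1 : ℕ) : ℝ) * (Nat.card {t : KTree (K + 1) // KTree.nodes t = m + 1} : ℝ)) =
        ∏ i ∈ Finset.range (K + 1), (((i + 1 : ℝ) + K * m) / ((i + 1 : ℝ) + (K + 1) * m)) := by
    intro m
    rw [KTree.finsum_leaves, KTree.card_trees, KTree.sum_leaves_forests]
    have h := KTree.ratio_eq K m _
      ((KTree.card_forests (K + 1) hk (m + 1) 1).trans (one_mul _))
    simpa using h
  simp only [hfun]
  have hlim : ((((K + 1 : ℕ) : ℝ) - 1) / ((K + 1 : ℕ) : ℝ)) ^ (K + 1) =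
      ∏ _i ∈ Finset.range (K + 1), ((K : ℝ) / (K + 1)) := by
    simp [div_pow]
  rw [hlim]
  refine tendsto_finsetProd _ fun i _ => ?_
  exact tendsto_add_mul_div_add_mul_atTop_nhds (i + 1 : ℝ) (i + 1) (K : ℝ) (by positivity)
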